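/- Let (G,T) be a bipartite graft, F a minimum join of (G,T), and r ∈ V(G). Let K be a decapital distance component of (G,T) with respect to r. If r' ∈ V(G)\V(K) is K-congruent to r, then K is also a decapital distance component of (G,T) with respect to r'. -/

import Mathlib

/-!
Paths are replaced by finite edge sets `J` with prescribed mod-2 boundary: an `{x, y}`-join is an
edge set whose odd vertices are `x` and `y` (none if `x = y`). Minimality of `F` says that edge
sets with all degrees even have nonnegative `F`-weight (`conservative_of_isMinJoin`), so an
`{x, y}`-join always contains a path of at most its weight, and `distF x y` is the least weight of
an `{x, y}`-join in the connected component of `x`. The tool for comparing joins is the four-point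
`exchange` property: an `{a, b}`-join and a `{c, d}`-join can be re-paired, within their union and
without changing the total weight, along a path in their symmetric difference.

Let `K` be a decapital distance component at level `i` for `r`. Bipartiteness makes adjacent
vertices have different distances from `r`, so every edge leaving `K` runs from level `i` to level
`i + 1`. The exchange property, applied along a walk inside `K`, shows that from a vertex of level
`i` in `K` a vertex `x ∈ K` is at distance at least `dist(r, x) - i` (`level_bound`). Applied
along walks in `K` again, it gives Sebő's theorem (`DecapData.beam`): exactly one edge `st` of
the cut of `K` lies in `F`, `s` is reached from `r` outside `K` with weight at most `i + 1`, and every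
`x ∈ K` is reached from `t` inside `K` with weight at most `dist(r, x) - i`. As a consequence,
an ear of `K` avoiding the beam `st` has a nonnegative interior (`DecapData.ear`).

Now let `j = dist(r', t) = dist(r', s) - 1`. A path from `r'` outside `K` to an end of a non-beam
edge of the cut extends through `K` and over `st` to `s`, so it has weight at least `j + 1`
(`DecapData.le_of_avoid`). Therefore a shortest path from `r'` to `t` enters `K` over the beam,
and continuing inside `K` shows `dist(r', x) ≤ j` on `K` (`DecapData.le_of_mem`). Splitting a
shortest path from `r'` to a neighbour of `K` at its first entry into and last exit from `K` shows
that such neighbours have distance at least `j + 1` (`DecapData.lt_of_adj`). So `K` is a component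
of the vertices at distance at most `j` from `r'`.
-/

namespace TightCuts

open SimpleGraph

variable {V : Type*}

/-- `(G, T)` is a graft: every connected component of `G` contains an even
number of vertices of `T`. -/
def IsGraft (G : SimpleGraph V) (T : Set V) : Prop :=
  ∀ c : G.ConnectedComponent, Even ((T ∩ {v | G.connectedComponentMk v = c}).ncard)

/-- `F` is a join of the graft `(G, T)`: a set of edges such that a vertex is
incident with an odd number of edges of `F` exactly when it lies in `T`. -/
def IsJoin (G : SimpleGraph V) (T : Set V) (F : Set (Sym2 V)) : Prop :=
  F ⊆ G.edgeSet ∧ ∀ v : V, (Odd ({e ∈ F | v ∈ e}).ncard ↔ v ∈ T)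

/-- `ν(G, T)`: the minimum size of a join of `(G, T)`. -/
noncomputable def nu (G : SimpleGraph V) (T : Set V) : ℕ :=
  sInf {n | ∃ F : Set (Sym2 V), IsJoin G T F ∧ F.ncard = n}

/-- `F` is a minimum join of `(G, T)`. -/
def IsMinJoin (G : SimpleGraph V) (T : Set V) (F : Set (Sym2 V)) : Prop :=
  IsJoin G T F ∧ F.ncard = nu G T

open Classical in
/-- The `F`-weight of an edge: `-1` if the edge lies in `F`, `+1` otherwise. -/
noncomputable def edgeWt (F : Set (Sym2 V)) (e : Sym2 V) : ℤ :=
  if e ∈ F then -1 else 1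

/-- The `F`-weight of a walk: the sum of the `F`-weights of its edges. -/
noncomputable def walkWt (F : Set (Sym2 V)) {G : SimpleGraph V} {x y : V}
    (p : G.Walk x y) : ℤ :=
  (p.edges.map (edgeWt F)).sum

/-- The `F`-distance between `x` and `y`: the minimum `F`-weight of a path
between `x` and `y`. -/
noncomputable def distF (G : SimpleGraph V) (F : Set (Sym2 V)) (x y : V) : ℤ :=
  sInf {n : ℤ | ∃ p : G.Walk x y, p.IsPath ∧ walkWt F p = n}

/-- `K` is (the vertex set of) a connected component of the subgraph of `G`
induced by `U`. -/
def IsComponentOf (G : SimpleGraph V) (U K : Set V) : Prop :=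
  K.Nonempty ∧ K ⊆ U ∧ (G.induce K).Connected ∧
    ∀ x ∈ K, ∀ y ∈ U, G.Adj x y → y ∈ K

/-- `K` is a distance component of the graft with respect to root `r` at level `i`
(with respect to a minimum join `F`): `i` is attained as an `F`-distance from `r`,
and `K` is a connected component of the subgraph induced by the vertices at
`F`-distance at most `i` from `r`. -/
def IsDistCompAt (G : SimpleGraph V) (F : Set (Sym2 V)) (r : V) (i : ℤ) (K : Set V) : Prop :=
  (∃ x, distF G F r x = i) ∧ IsComponentOf G {x | distF G F r x ≤ i} K

/-- `K` is a decapital distance component with respect to root `r`: a distance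
component (at some level) not containing `r`. -/
def IsDecapDistComp (G : SimpleGraph V) (F : Set (Sym2 V)) (r : V) (K : Set V) : Prop :=
  ∃ i : ℤ, IsDistCompAt G F r i K ∧ r ∉ K

/-- The edge cut `δ_G(K)`: edges of `G` with exactly one end in `K`. -/
def cutEdges (G : SimpleGraph V) (K : Set V) : Set (Sym2 V) :=
  {e | e ∈ G.edgeSet ∧ ∃ x y, e = s(x, y) ∧ x ∈ K ∧ y ∉ K}

/-- An edge is allowed in `(G, T)` if some minimum join contains it. -/
def Allowed (G : SimpleGraph V) (T : Set V) (e : Sym2 V) : Prop :=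
  ∃ F, IsMinJoin G T F ∧ e ∈ F

/-- Two vertices are factor-connected if there is a walk between them all of
whose edges are allowed. -/
def FactorConnected (G : SimpleGraph V) (T : Set V) (u v : V) : Prop :=
  ∃ p : G.Walk u v, ∀ e ∈ p.edges, Allowed G T e

/-- `C` is (the vertex set of) a factor-component of `(G, T)`: an equivalence
class of factor-connectivity. -/
def IsFactorComponent (G : SimpleGraph V) (T : Set V) (C : Set V) : Prop :=
  ∃ v, C = {u | FactorConnected G T u v}

/-- The Kotzig–Lovász relation: `u ∼ v` iff `u = v`, or `u` and `v` are
factor-connected (hence in the same factor-component) and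
`ν(G, T) = ν(G, T Δ {u, v})`. -/
def klRel (G : SimpleGraph V) (T : Set V) (u v : V) : Prop :=
  u = v ∨ (FactorConnected G T u v ∧ nu G T = nu G (symmDiff T {u, v}))

/-- `S` is a Kotzig–Lovász class of `(G, T)`. -/
def IsKLClass (G : SimpleGraph V) (T : Set V) (S : Set V) : Prop :=
  ∃ v, S = {u | klRel G T u v}

/-- `A(K)` for a distance component `K` at level `i`: the vertices of `K` at
`F`-distance exactly `i` from `r`. -/
def AK (G : SimpleGraph V) (F : Set (Sym2 V)) (r : V) (i : ℤ) (K : Set V) : Set V :=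
  K ∩ {x | distF G F r x = i}

/-- `D(K) = V(K) \ A(K)`. -/
def DK (G : SimpleGraph V) (F : Set (Sym2 V)) (r : V) (i : ℤ) (K : Set V) : Set V :=
  K \ AK G F r i K

/-- `S` is the root class of `K`: a Kotzig–Lovász class containing all ends in
`K` of allowed edges of the cut `δ_G(K)`. -/
def IsRootClass (G : SimpleGraph V) (T : Set V) (K S : Set V) : Prop :=
  IsKLClass G T S ∧ ∀ e ∈ cutEdges G K, Allowed G T e → ∀ u ∈ e, u ∈ K → u ∈ S

/-- `S` is the antiroot class of `K`: a Kotzig–Lovász class containing all ends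
outside `K` of allowed edges of the cut `δ_G(K)`. -/
def IsAntirootClass (G : SimpleGraph V) (T : Set V) (K S : Set V) : Prop :=
  IsKLClass G T S ∧ ∀ e ∈ cutEdges G K, Allowed G T e → ∀ u ∈ e, u ∉ K → u ∈ S

/-- The family `𝒜(K)`: the root fragment `K ∩ S_K` together with all
Kotzig–Lovász classes other than `S_K` that contain a vertex of `A(K)`. -/
def famA (G : SimpleGraph V) (T : Set V) (F : Set (Sym2 V)) (r : V) (i : ℤ)
    (K S_K : Set V) : Set (Set V) :=
  insert (K ∩ S_K) {S | IsKLClass G T S ∧ S ≠ S_K ∧ (S ∩ AK G F r i K).Nonempty}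

/-- `L` is adjacent to a vertex of `S` by an allowed edge. -/
def AdjAllowed (G : SimpleGraph V) (T : Set V) (L S : Set V) : Prop :=
  ∃ x ∈ L, ∃ s ∈ S, G.Adj x s ∧ Allowed G T s(x, s)

/-- `𝒩_K(S)`: the family of connected components of `G[D(K)]` adjacent to a
vertex of `S` by an allowed edge. -/
def NKfam (G : SimpleGraph V) (T : Set V) (F : Set (Sym2 V)) (r : V) (i : ℤ)
    (K S : Set V) : Set (Set V) :=
  {L | IsComponentOf G (DK G F r i K) L ∧ AdjAllowed G T L S}

/-- `U_K(S)`: the union of the vertex sets of the members of `𝒩_K(S)`. -/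
def UK (G : SimpleGraph V) (T : Set V) (F : Set (Sym2 V)) (r : V) (i : ℤ)
    (K S : Set V) : Set V :=
  ⋃₀ NKfam G T F r i K S

/-- `X` is an `F`-negative set for `S`: `X` is disjoint from `S` and every
`x ∈ X` admits a path of negative `F`-weight from `x` to a vertex of `S` whose
vertices, except the end in `S`, all lie in `X`. -/
def IsNegSet (G : SimpleGraph V) (F : Set (Sym2 V)) (S X : Set V) : Prop :=
  X ⊆ Sᶜ ∧ ∀ x ∈ X, ∃ y ∈ S, ∃ p : G.Walk x y, p.IsPath ∧ walkWt F p < 0 ∧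
    ∀ v ∈ p.support, v ≠ y → v ∈ X

/-- The maximum `F`-negative set for `S`: the union of all `F`-negative sets
for `S`. -/
def maxNegSet (G : SimpleGraph V) (F : Set (Sym2 V)) (S : Set V) : Set V :=
  ⋃₀ {X | IsNegSet G F S X}

/-- The maximum `F`-negative set for `S` avoiding `Y`. -/
def maxNegSetAvoiding (G : SimpleGraph V) (F : Set (Sym2 V)) (S Y : Set V) : Set V :=
  ⋃₀ {X | IsNegSet G F S X ∧ Disjoint X Y}

/-! ### Joins -/

section Joins

set_option linter.unusedSectionVars false

open scoped symmDiff

variable [Fintype V] [DecidableEq V]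

/-- The mod-2 boundary of a finite edge set: the degree parity at every vertex. -/
def bd (J : Finset (Sym2 V)) (v : V) : ZMod 2 := ∑ e ∈ J, if v ∈ e then 1 else 0

/-- The indicator of a vertex, as a mod-2 vector. -/
def dl (v : V) : V → ZMod 2 := fun w => if w = v then 1 else 0

/-- The total `F`-weight of a finite edge set. -/
noncomputable def wt (F : Set (Sym2 V)) (J : Finset (Sym2 V)) : ℤ := ∑ e ∈ J, edgeWt F e

/-- `J` is an `{x, y}`-join with all its edges in `E`. Its boundary is taken mod 2, so that for
`x = y` every vertex has even degree in `J`. -/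
def IsJn (E : Set (Sym2 V)) (J : Finset (Sym2 V)) (x y : V) : Prop :=
  (∀ e ∈ J, e ∈ E) ∧ bd J = dl x + dl y

/-- `F` is conservative: every edge set of `G` with all degrees even has nonnegative
`F`-weight. -/
def Conservative (G : SimpleGraph V) (F : Set (Sym2 V)) : Prop :=
  ∀ C : Finset (Sym2 V), (∀ e ∈ C, e ∈ G.edgeSet) → bd C = 0 → 0 ≤ wt F C

/-- The edges of `G` with both ends in `K`. -/
def ins (G : SimpleGraph V) (K : Set V) : Set (Sym2 V) :=
  {e | e ∈ G.edgeSet ∧ ∀ v ∈ e, v ∈ K}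

theorem dbl (f : V → ZMod 2) : f + f = 0 := by
  funext v
  exact CharTwo.add_self_eq_zero (f v)

theorem sum_univ {M : Type*} [AddCommMonoid M] (J : Finset (Sym2 V)) (f : Sym2 V → M) :
    ∑ e ∈ J, f e = ∑ e, if e ∈ J then f e else 0 := by
  rw [Finset.sum_ite_mem, Finset.univ_inter]

theorem bd_symmDiff (J P : Finset (Sym2 V)) : bd (J ∆ P) = bd J + bd P := by
  funext v
  simp only [bd, Pi.add_apply]
  rw [sum_univ (J ∆ P), sum_univ J, sum_univ P, ← Finset.sum_add_distrib]
  refine Finset.sum_congr rfl fun e _ => ?_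
  by_cases h1 : e ∈ J <;> by_cases h2 : e ∈ P <;> by_cases h3 : v ∈ e <;>
    simp [Finset.mem_symmDiff, h1, h2, h3]
  decide

theorem wt_exchange (F : Set (Sym2 V)) (J₁ J₂ P : Finset (Sym2 V)) (hP : P ⊆ J₁ ∆ J₂) :
    wt F (J₁ ∆ P) + wt F (J₂ ∆ P) = wt F J₁ + wt F J₂ := by
  simp only [wt]
  rw [sum_univ (J₁ ∆ P), sum_univ (J₂ ∆ P), sum_univ J₁, sum_univ J₂,
    ← Finset.sum_add_distrib, ← Finset.sum_add_distrib]
  refine Finset.sum_congr rfl fun e _ => ?_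
  by_cases h3 : e ∈ P
  · have := hP h3
    rw [Finset.mem_symmDiff] at this
    by_cases h1 : e ∈ J₁ <;> by_cases h2 : e ∈ J₂ <;>
      simp_all [Finset.mem_symmDiff]
  · by_cases h1 : e ∈ J₁ <;> by_cases h2 : e ∈ J₂ <;>
      simp_all [Finset.mem_symmDiff]

theorem bd_union {J P : Finset (Sym2 V)} (h : Disjoint J P) : bd (J ∪ P) = bd J + bd P := by
  funext v
  exact Finset.sum_union h

theorem wt_union (F : Set (Sym2 V)) {J P : Finset (Sym2 V)} (h : Disjoint J P) :
    wt F (J ∪ P) = wt F J + wt F P :=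
  Finset.sum_union h

theorem bd_single {x y : V} (h : x ≠ y) : bd {s(x, y)} = dl x + dl y := by
  funext v
  simp only [bd, dl, Finset.sum_singleton, Sym2.mem_iff, Pi.add_apply]
  by_cases h1 : v = x <;> by_cases h2 : v = y <;> simp_all

theorem wt_single (F : Set (Sym2 V)) (e : Sym2 V) : wt F {e} = edgeWt F e := by
  simp [wt]

theorem edgeWt_le (F : Set (Sym2 V)) (e : Sym2 V) : edgeWt F e ≤ 1 := by
  unfold edgeWt; split_ifs <;> norm_num

theorem le_edgeWt (F : Set (Sym2 V)) (e : Sym2 V) : -1 ≤ edgeWt F e := by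
  unfold edgeWt; split_ifs <;> norm_num

theorem edgeWt_mem {F : Set (Sym2 V)} {e : Sym2 V} (h : e ∈ F) : edgeWt F e = -1 := by
  simp [edgeWt, h]

theorem edgeWt_not_mem {F : Set (Sym2 V)} {e : Sym2 V} (h : e ∉ F) : edgeWt F e = 1 := by
  simp [edgeWt, h]

theorem wt_symmDiff_single (F : Set (Sym2 V)) (J : Finset (Sym2 V)) (e : Sym2 V) :
    wt F (J ∆ {e}) ≤ wt F J + 1 := by
  by_cases h : e ∈ J
  · have h1 : J ∆ {e} = J.erase e := by
      ext a; by_cases ha : a = e <;> simp_all [Finset.mem_symmDiff]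
    have h2 : wt F (J.erase e) + edgeWt F e = wt F J := Finset.sum_erase_add _ _ h
    rw [h1]
    linarith [le_edgeWt F e]
  · have h1 : J ∆ {e} = J ∪ {e} := by
      ext a; by_cases ha : a = e <;> simp_all [Finset.mem_symmDiff]
    rw [h1, wt_union F (by simpa using h), wt_single]
    linarith [edgeWt_le F e]

theorem symmDiff_single_isJn {E : Set (Sym2 V)} {J : Finset (Sym2 V)} {x y z : V}
    (h : IsJn E J x y) (he : s(y, z) ∈ E) (hyz : y ≠ z) : IsJn E (J ∆ {s(y, z)}) x z := by
  refine ⟨fun e hh => ?_, ?_⟩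
  · rcases Finset.mem_symmDiff.1 hh with h1 | h1
    · exact h.1 e h1.1
    · rw [Finset.mem_singleton.1 h1.1]; exact he
  · rw [bd_symmDiff, h.2, bd_single hyz]
    linear_combination dbl (dl y)

theorem IsJn.symm {E : Set (Sym2 V)} {J : Finset (Sym2 V)} {x y : V} (h : IsJn E J x y) :
    IsJn E J y x := ⟨h.1, by rw [h.2, add_comm]⟩

theorem IsJn.mono {E E' : Set (Sym2 V)} {J : Finset (Sym2 V)} {x y : V} (h : IsJn E J x y)
    (hE : E ⊆ E') : IsJn E' J x y := ⟨fun e he => hE (h.1 e he), h.2⟩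

theorem IsJn.glue {E : Set (Sym2 V)} {J P : Finset (Sym2 V)} {x y z : V} (h : IsJn E J x y)
    (h' : IsJn E P y z) (hd : Disjoint J P) : IsJn E (J ∪ P) x z := by
  refine ⟨fun e he => ?_, ?_⟩
  · rcases Finset.mem_union.1 he with h1 | h1
    exacts [h.1 e h1, h'.1 e h1]
  · rw [bd_union hd, h.2, h'.2]
    linear_combination dbl (dl y)

theorem IsJn.single {E : Set (Sym2 V)} {x y : V} (he : s(x, y) ∈ E) (hxy : x ≠ y) :
    IsJn E {s(x, y)} x y :=
  ⟨fun e h => by rw [Finset.mem_singleton.1 h]; exact he, bd_single hxy⟩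

theorem isJn_nil {E : Set (Sym2 V)} (x : V) : IsJn E ∅ x x :=
  ⟨by simp, by rw [dbl]; funext v; simp [bd]⟩

theorem path_isJn {G : SimpleGraph V} {x y : V} (p : G.Walk x y) (hp : p.IsPath)
    {E : Set (Sym2 V)} (hE : ∀ e ∈ p.edges, e ∈ E) : IsJn E p.edges.toFinset x y := by
  induction p with
  | nil => exact isJn_nil _
  | @cons u v w h p ih =>
    rw [Walk.cons_isPath_iff] at hp
    have hnot : s(u, v) ∉ p.edges := fun hm => hp.2 (p.fst_mem_support_of_mem_edges hm)
    rw [Walk.edges_cons, List.toFinset_cons, Finset.insert_eq]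
    refine IsJn.glue (IsJn.single (hE _ (by simp)) h.ne) (ih hp.1 fun e he => hE e (by simp [he])) ?_
    simpa using hnot

theorem path_wt {G : SimpleGraph V} {x y : V} (F : Set (Sym2 V)) (p : G.Walk x y)
    (hp : p.IsPath) : wt F p.edges.toFinset = walkWt F p :=
  List.sum_toFinset _ hp.isTrail.edges_nodup

/-- From a vertex of odd degree in a finite edge set there is a path in this set to another vertex
of odd degree. -/
theorem exists_path_odd (G : SimpleGraph V) (n : ℕ) : ∀ (D : Finset (Sym2 V)), D.card = n →
    (∀ e ∈ D, e ∈ G.edgeSet) → ∀ u, bd D u = 1 →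
    ∃ v, v ≠ u ∧ bd D v = 1 ∧ ∃ p : G.Walk u v, ∀ e ∈ p.edges, e ∈ D := by
  induction n with
  | zero =>
    intro D hD _ u hu
    rw [Finset.card_eq_zero.1 hD] at hu
    simp [bd] at hu
  | succ n ih =>
    intro D hD hE u hu
    obtain ⟨e, heD, hue⟩ : ∃ e ∈ D, u ∈ e := by
      by_contra! hcon
      have : bd D u = 0 := Finset.sum_eq_zero fun e he => by simp [hcon e he]
      rw [this] at hu
      exact absurd hu (by decide)
    obtain ⟨w, rfl⟩ := hue
    have hadj : G.Adj u w := hE _ heD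
    by_cases hw : bd D w = 1
    · exact ⟨w, hadj.ne', hw, .cons hadj .nil, by simpa using heD⟩
    have hbd : bd (D.erase s(u, w)) + (dl u + dl w) = bd D := by
      rw [← bd_single hadj.ne, ← bd_union (by simp)]
      congr 1
      ext a; by_cases ha : a = s(u, w) <;> simp_all
    have hu' := congrFun hbd u
    have hw' := congrFun hbd w
    simp only [Pi.add_apply, dl, if_true, hadj.ne, hadj.ne', if_false, add_zero, zero_add, hu]
      at hu' hw'
    have hw0 : bd D w = 0 := by
      generalize bd D w = z at hw
      revert z; decide
    have hw1 : bd (D.erase s(u, w)) w = 1 := by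
      rw [hw0] at hw'
      generalize bd (D.erase s(u, w)) w = z at hw'
      revert z; decide
    have hu1 : bd (D.erase s(u, w)) u = 0 := by simpa using hu'
    obtain ⟨v, hvw, hv, p, hp⟩ := ih (D.erase s(u, w))
      (by rw [Finset.card_erase_of_mem heD, hD]; rfl)
      (fun e he => hE e (Finset.mem_of_mem_erase he)) w hw1
    have hvu : v ≠ u := by
      rintro rfl
      rw [hu1] at hv
      exact absurd hv (by decide)
    refine ⟨v, hvu, ?_, .cons hadj p, ?_⟩
    · have := congrFun hbd v
      simpa [dl, hvu, hvw, hv] using this.symm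
    · intro e he
      rw [Walk.edges_cons, List.mem_cons] at he
      rcases he with rfl | he
      exacts [heD, Finset.mem_of_mem_erase (hp e he)]

/-- An `{x, y}`-join contains a path from `x` to `y` of at most its weight: what remains after
the removal of a path has even degrees. -/
theorem exists_path_of_isJn {G : SimpleGraph V} {F : Set (Sym2 V)} (hc : Conservative G F)
    {J : Finset (Sym2 V)} {x y : V} (h : IsJn G.edgeSet J x y) :
    ∃ p : G.Walk x y, p.IsPath ∧ walkWt F p ≤ wt F J := by
  by_cases hxy : x = y
  · subst hxy
    refine ⟨.nil, .nil, ?_⟩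
    simpa [walkWt] using hc J h.1 (by rw [h.2, dbl])
  · obtain ⟨v, hvx, hv, p, hp⟩ := exists_path_odd G _ J rfl h.1 x
      (by rw [h.2]; simp [dl, hxy])
    have hvy : v = y := by
      by_contra hne
      rw [h.2] at hv
      simp [dl, hvx, hne] at hv
    subst hvy
    have hsub : p.bypass.edges.toFinset ⊆ J := fun e he =>
      hp e (p.edges_bypass_subset_edges (List.mem_toFinset.1 he))
    refine ⟨p.bypass, p.bypass_isPath, ?_⟩
    have hj := path_isJn p.bypass p.bypass_isPath (E := G.edgeSet)
      (fun e he => h.1 e (hsub (List.mem_toFinset.2 he)))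
    have hw : wt F (J \ p.bypass.edges.toFinset) + wt F p.bypass.edges.toFinset = wt F J :=
      Finset.sum_sdiff hsub
    have hb : bd (J \ p.bypass.edges.toFinset) + bd p.bypass.edges.toFinset = bd J := by
      funext z; exact Finset.sum_sdiff hsub
    have := hc (J \ p.bypass.edges.toFinset) (fun e he => h.1 e (Finset.mem_sdiff.1 he).1)
      (by rw [hj.2, h.2] at hb; simpa using hb)
    rw [← path_wt F _ p.bypass_isPath]
    linarith

/-- The exchange property of joins: given an `{a, b}`-join and a `{c, d}`-join, swapping the
edges of a path that starts at `a` in their symmetric difference re-pairs the four ends without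
changing the total weight. -/
theorem exchange {G : SimpleGraph V} (F : Set (Sym2 V)) {E : Set (Sym2 V)} (hE : E ⊆ G.edgeSet)
    {J₁ J₂ : Finset (Sym2 V)} {a b c d : V} (h₁ : IsJn E J₁ a b) (h₂ : IsJn E J₂ c d) :
    ∃ J₃ J₄, wt F J₃ + wt F J₄ = wt F J₁ + wt F J₂ ∧
      (((∀ e ∈ J₃, e ∈ E) ∧ (∀ e ∈ J₄, e ∈ E) ∧ bd J₃ = 0 ∧ bd J₄ = dl a + dl b + dl c + dl d) ∨
        (IsJn E J₃ c b ∧ IsJn E J₄ a d) ∨ (IsJn E J₃ d b ∧ IsJn E J₄ a c)) := by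
  have hD : bd (J₁ ∆ J₂) = dl a + dl b + dl c + dl d := by
    rw [bd_symmDiff, h₁.2, h₂.2]; ring
  have hsub : ∀ e ∈ J₁ ∆ J₂, e ∈ E := fun e he => by
    rcases Finset.mem_symmDiff.1 he with h | h
    exacts [h₁.1 e h.1, h₂.1 e h.1]
  by_cases ha : bd (J₁ ∆ J₂) a = 1
  · obtain ⟨v, hva, hv, p, hp⟩ := exists_path_odd G _ _ rfl (fun e he => hE (hsub e he)) a ha
    have hP : p.bypass.edges.toFinset ⊆ J₁ ∆ J₂ := fun e he =>
      hp e (p.edges_bypass_subset_edges (List.mem_toFinset.1 he))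
    have hj := path_isJn p.bypass p.bypass_isPath (E := E)
      (fun e he => hsub e (hP (List.mem_toFinset.2 he)))
    set P := p.bypass.edges.toFinset
    have hs : ∀ J : Finset (Sym2 V), (∀ e ∈ J, e ∈ E) → ∀ e ∈ J ∆ P, e ∈ E := by
      intro J hJ e he
      rcases Finset.mem_symmDiff.1 he with h | h
      exacts [hJ e h.1, hj.1 e h.1]
    refine ⟨J₁ ∆ P, J₂ ∆ P, wt_exchange F _ _ _ hP, ?_⟩
    have b3 : bd (J₁ ∆ P) = dl b + dl v := by
      rw [bd_symmDiff, h₁.2, hj.2]; linear_combination dbl (dl a)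
    have b4 : bd (J₂ ∆ P) = dl c + dl d + dl a + dl v := by
      rw [bd_symmDiff, h₂.2, hj.2]; ring
    have hcase : v = b ∨ v = c ∨ v = d := by
      by_contra! hcon
      rw [hD] at hv
      simp [dl, hva, hcon.1, hcon.2.1, hcon.2.2] at hv
    rcases hcase with rfl | rfl | rfl
    · exact .inl ⟨hs _ h₁.1, hs _ h₂.1, by rw [b3, dbl], by rw [b4]; ring⟩
    · refine .inr (.inl ⟨⟨hs _ h₁.1, by rw [b3]; ring⟩, hs _ h₂.1, ?_⟩)
      rw [b4]; linear_combination dbl (dl v)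
    · refine .inr (.inr ⟨⟨hs _ h₁.1, by rw [b3]; ring⟩, hs _ h₂.1, ?_⟩)
      rw [b4]; linear_combination dbl (dl v)
  · have hcase : a = b ∨ a = c ∨ a = d := by
      by_contra! hcon
      rw [hD] at ha
      simp [dl, hcon.1, hcon.2.1, hcon.2.2] at ha
    refine ⟨J₁, J₂, rfl, ?_⟩
    rcases hcase with rfl | rfl | rfl
    · refine .inl ⟨h₁.1, h₂.1, by rw [h₁.2, dbl], ?_⟩
      rw [h₂.2]; linear_combination -dbl (dl a)
    · exact .inr (.inl ⟨h₁, h₂⟩)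
    · exact .inr (.inr ⟨h₁, h₂.symm⟩)

/-- The exchange property when `b` and `d` are adjacent: either `a` and `c` are joined within one
unit of the total weight, or the pairs can be crossed over. -/
theorem exchange_adj {G : SimpleGraph V} {F : Set (Sym2 V)} (hc : Conservative G F)
    {E : Set (Sym2 V)} (hE : E ⊆ G.edgeSet) {J₁ J₂ : Finset (Sym2 V)} {a b c d : V}
    (h₁ : IsJn E J₁ a b) (h₂ : IsJn E J₂ c d) (hbd : s(b, d) ∈ E) :
    (∃ J, IsJn E J a c ∧ wt F J ≤ wt F J₁ + wt F J₂ + 1) ∨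
      ∃ J₃ J₄, wt F J₃ + wt F J₄ = wt F J₁ + wt F J₂ ∧ IsJn E J₃ c b ∧ IsJn E J₄ a d := by
  have hne : b ≠ d := G.ne_of_adj (hE hbd)
  obtain ⟨J₃, J₄, hw, ⟨hE₃, hE₄, hb₃, hb₄⟩ | h | ⟨h₃, h₄⟩⟩ := exchange (G := G) F hE h₁ h₂
  · left
    have h0 := hc J₃ (fun e he => hE (hE₃ e he)) hb₃
    refine ⟨J₄ ∆ {s(b, d)}, ⟨fun e he => ?_, ?_⟩, ?_⟩
    · rcases Finset.mem_symmDiff.1 he with h | h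
      · exact hE₄ e h.1
      · rw [Finset.mem_singleton.1 h.1]; exact hbd
    · rw [bd_symmDiff, hb₄, bd_single hne]
      linear_combination dbl (dl b) + dbl (dl d)
    · linarith [wt_symmDiff_single F J₄ s(b, d)]
  · exact .inr ⟨J₃, J₄, hw, h⟩
  · left
    refine ⟨J₄, h₄, ?_⟩
    have h5 := symmDiff_single_isJn h₃ hbd hne
    have h0 := hc _ (fun e he => hE (h5.1 e he)) (by rw [h5.2, dbl])
    linarith [wt_symmDiff_single F J₃ s(b, d)]

end Joins

/-! ### Distances -/

section Distances

open scoped symmDiff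

set_option linter.unusedSectionVars false

variable [Fintype V] [DecidableEq V] {G : SimpleGraph V} {F : Set (Sym2 V)}

/-- Replacing `F` by its symmetric difference with an even-degree set gives another join, so a
minimum join is conservative. -/
theorem conservative_of_isMinJoin {T : Set V} (hF : IsMinJoin G T F) : Conservative G F := by
  classical
  intro C hC hb
  set F₀ : Finset (Sym2 V) := F.toFinset with hF₀
  have hpar : ∀ (J : Finset (Sym2 V)) (v : V),
      (Odd ({e ∈ (J : Set (Sym2 V)) | v ∈ e}).ncard ↔ bd J v = 1) := by
    intro J v
    have h1 : ({e ∈ (J : Set (Sym2 V)) | v ∈ e}) = ((J.filter (v ∈ ·) : Finset _) : Set _) := by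
      ext e; simp
    rw [h1, Set.ncard_coe_finset, ← ZMod.natCast_eq_one_iff_odd]
    simp [bd]
  have hco : (F₀ : Set (Sym2 V)) = F := by simp [hF₀]
  have hjoin : IsJoin G T ((F₀ ∆ C : Finset _) : Set (Sym2 V)) := by
    refine ⟨fun e he => ?_, fun v => ?_⟩
    · rcases Finset.mem_symmDiff.1 he with h | h
      · exact hF.1.1 (by simpa [hF₀] using h.1)
      · exact hC e h.1
    · rw [hpar, bd_symmDiff, hb, add_zero, ← hpar, hco]
      exact hF.1.2 v
  have hle : F₀.card ≤ (F₀ ∆ C).card := by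
    have h1 : nu G T ≤ ((F₀ ∆ C : Finset _) : Set (Sym2 V)).ncard := Nat.sInf_le ⟨_, hjoin, rfl⟩
    rw [← hF.2, Set.ncard_coe_finset, ← hco, Set.ncard_coe_finset] at h1
    exact h1
  have hcard : ((F₀ ∆ C).card : ℤ) = F₀.card + wt F C := by
    simp only [Finset.card_eq_sum_ones, wt, Nat.cast_sum]
    rw [sum_univ (F₀ ∆ C), sum_univ F₀, sum_univ C, ← Finset.sum_add_distrib]
    refine Finset.sum_congr rfl fun e _ => ?_
    by_cases h1 : e ∈ F <;> by_cases h2 : e ∈ C <;>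
      simp [Finset.mem_symmDiff, hF₀, edgeWt, h1, h2]
  have : (F₀.card : ℤ) ≤ (F₀ ∆ C).card := by exact_mod_cast hle
  linarith

theorem weights_finite (x y : V) :
    {n : ℤ | ∃ p : G.Walk x y, p.IsPath ∧ walkWt F p = n}.Finite := by
  refine (Set.finite_range (wt F)).subset ?_
  rintro n ⟨p, hp, rfl⟩
  exact ⟨_, path_wt F p hp⟩

theorem distF_le_walkWt {x y : V} (p : G.Walk x y) (hp : p.IsPath) :
    distF G F x y ≤ walkWt F p :=
  csInf_le (weights_finite x y).bddBelow ⟨p, hp, rfl⟩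

theorem exists_path_distF {x y : V} (h : G.Reachable x y) :
    ∃ p : G.Walk x y, p.IsPath ∧ walkWt F p = distF G F x y := by
  obtain ⟨p⟩ := h
  exact Int.csInf_mem (s := {n : ℤ | ∃ p : G.Walk x y, p.IsPath ∧ walkWt F p = n})
    ⟨_, p.bypass, p.bypass_isPath, rfl⟩ (weights_finite x y).bddBelow

/-- The infimum over no path at all is `0`. -/
theorem distF_of_not_reachable {x y : V} (h : ¬ G.Reachable x y) : distF G F x y = 0 := by
  have : {n : ℤ | ∃ p : G.Walk x y, p.IsPath ∧ walkWt F p = n} = ∅ := by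
    rw [Set.eq_empty_iff_forall_notMem]
    rintro n ⟨p, -⟩
    exact h ⟨p⟩
  rw [distF, this, Int.csInf_empty]

theorem distF_le_wt (hc : Conservative G F) {J : Finset (Sym2 V)} {x y : V}
    (h : IsJn G.edgeSet J x y) : distF G F x y ≤ wt F J := by
  obtain ⟨p, hp, hw⟩ := exists_path_of_isJn hc h
  exact (distF_le_walkWt p hp).trans hw

theorem exists_isJn_distF {x y : V} (h : G.Reachable x y) :
    ∃ J, IsJn G.edgeSet J x y ∧ wt F J = distF G F x y := by
  obtain ⟨p, hp, hw⟩ := exists_path_distF (F := F) h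
  exact ⟨_, path_isJn p hp fun e he => p.edges_subset_edgeSet he, by rw [path_wt F p hp, hw]⟩

theorem distF_lip (hc : Conservative G F) {x y z : V} (h : G.Reachable x y) (hyz : G.Adj y z) :
    distF G F x z ≤ distF G F x y + 1 := by
  obtain ⟨J, hJ, hw⟩ := exists_isJn_distF (F := F) h
  rw [← hw]
  exact (distF_le_wt hc (symmDiff_single_isJn hJ hyz hyz.ne)).trans (wt_symmDiff_single F J _)

theorem even_walkWt (c : G.Coloring Bool) {x y : V} (p : G.Walk x y) :
    Even (walkWt F p) ↔ (c x ↔ c y) := by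
  rw [← c.even_length_iff_congr p]
  induction p with
  | nil => simp [walkWt]
  | @cons u v w h p ih =>
    have h1 : walkWt F (.cons h p) = edgeWt F s(u, v) + walkWt F p := by simp [walkWt]
    rw [h1, Walk.length_cons, Int.even_add, ih, Nat.even_add_one]
    have : ¬ Even (edgeWt F s(u, v)) := by
      unfold edgeWt; split_ifs <;> decide
    tauto

theorem distF_ne (c : G.Coloring Bool) {x y z : V} (h : G.Reachable x y) (hyz : G.Adj y z) :
    distF G F x y ≠ distF G F x z := by
  obtain ⟨p, -, hp⟩ := exists_path_distF (F := F) h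
  obtain ⟨q, -, hq⟩ := exists_path_distF (F := F) (h.trans hyz.reachable)
  intro heq
  have h1 := even_walkWt (F := F) c p
  have h2 := even_walkWt (F := F) c q
  have h3 := c.valid hyz
  rw [hp, heq, ← hq, h2] at h1
  revert h1 h3
  cases c x <;> cases c y <;> cases c z <;> simp

/-- If `a` lies at distance `i` from `r` and `x` is joined to `a` by a walk inside the vertices at
distance at most `i`, then the distance between `a` and `x` is at least `dist(r, x) - i`. The proof
follows the walk; where the distance from `r` goes up, a cheaper `{a, x'}`-join exchanged with
a shortest path from `r` to the previous vertex would bring `r` too close to `a`. -/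
theorem level_bound (hc : Conservative G F) (c : G.Coloring Bool) {r a : V} {i : ℤ}
    (hra : G.Reachable r a) (ha : distF G F r a = i) {x : V} (q : G.Walk x a)
    (hq : ∀ v ∈ q.support, distF G F r v ≤ i) :
    ∀ J, IsJn G.edgeSet J a x → distF G F r x - i ≤ wt F J := by
  induction q with
  | nil =>
    intro J hJ
    rw [ha, sub_self]
    exact hc J hJ.1 (by rw [hJ.2, dbl])
  | @cons x' x a hadj q ih =>
    have ih' := ih hra ha (fun v hv => hq v (by simp [hv]))
    have hrx : G.Reachable r x := hra.trans q.reverse.reachable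
    have hx'i : distF G F r x' ≤ i := hq x' (by simp)
    have h1 := distF_lip hc hrx hadj.symm
    have h2 := distF_ne (F := F) c hrx hadj.symm
    intro J hJ
    by_contra! hlt
    obtain ⟨p, hp, hpw⟩ := exists_path_of_isJn hc hJ
    have hJp := path_isJn p hp (E := G.edgeSet) fun e he => p.edges_subset_edgeSet he
    have hwp := path_wt F p hp
    have h3 := ih' _ (symmDiff_single_isJn hJp (z := x) hadj.symm.symm hadj.ne)
    have h4 := wt_symmDiff_single F p.edges.toFinset s(x', x)
    have h5 : distF G F r x' = distF G F r x + 1 := by omega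
    -- the two lower bounds differ by one, and parity excludes the larger value
    have h6 : walkWt F p = distF G F r x - i - 1 := by
      obtain ⟨pa, -, hpa⟩ := exists_path_distF (F := F) hra
      obtain ⟨px, -, hpx⟩ := exists_path_distF (F := F) (hrx.trans hadj.symm.reachable)
      have e1 := even_walkWt (F := F) c pa
      have e2 := even_walkWt (F := F) c px
      have e3 := even_walkWt (F := F) c p
      rw [hpa, ha] at e1
      rw [hpx, h5] at e2
      have e4 : Even (walkWt F p) ↔ (Even i ↔ Even (distF G F r x + 1)) := by
        rw [e1, e2, e3]
        cases c r <;> cases c a <;> cases c x' <;> simp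
      have h7 : walkWt F p = distF G F r x - i - 1 ∨ walkWt F p = distF G F r x - i := by omega
      rcases h7 with h7 | h7
      · exact h7
      · exfalso
        rw [h7] at e4
        simp only [Int.even_sub, Int.even_add_one] at e4
        by_cases hi : Even i <;> by_cases hx : Even (distF G F r x) <;> simp [hi, hx] at e4
    obtain ⟨J₁, hJ₁, hw₁⟩ := exists_isJn_distF (F := F) hrx
    have hE : s(x, x') ∈ G.edgeSet := hadj.symm
    rcases exchange_adj hc (Set.Subset.refl _) hJ₁ hJp hE with
      ⟨J₂, hJ₂, hw₂⟩ | ⟨J₃, J₄, hw, h₃, h₄⟩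
    · have := distF_le_wt hc hJ₂
      omega
    · have := ih' _ h₃
      have := distF_le_wt hc h₄
      omega

end Distances

/-! ### Distance components and their beams -/

section Components

open scoped symmDiff

set_option linter.unusedSectionVars false

variable [Fintype V] [DecidableEq V] {G : SimpleGraph V} {F : Set (Sym2 V)}

/-- A walk starting outside `K` that meets `K` splits at its first entry into `K`. -/
theorem first_entry (K : Set V) {x z : V} (p : G.Walk x z) (hx : x ∉ K) :
    (∀ v ∈ p.support, v ∉ K) ∨ ∃ y t, ∃ (h : G.Adj y t) (p₁ : G.Walk x y) (p₂ : G.Walk t z),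
      p = p₁.append (.cons h p₂) ∧ (∀ v ∈ p₁.support, v ∉ K) ∧ t ∈ K := by
  induction p with
  | nil => left; simpa using hx
  | @cons x w z h p ih =>
    by_cases hw : w ∈ K
    · exact .inr ⟨x, w, h, .nil, p, rfl, by simpa using hx, hw⟩
    · rcases ih hw with ih | ⟨y, t, h', p₁, p₂, rfl, h₁, h₂⟩
      · left
        intro v hv
        rw [Walk.support_cons, List.mem_cons] at hv
        rcases hv with rfl | hv
        exacts [hx, ih v hv]
      · refine .inr ⟨y, t, h', .cons h p₁, p₂, rfl, fun v hv => ?_, h₂⟩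
        rw [Walk.support_cons, List.mem_cons] at hv
        rcases hv with rfl | hv
        exacts [hx, h₁ v hv]

/-- A walk ending in `K` that is not contained in `K` splits at its last entry into `K`. -/
theorem last_entry (K : Set V) {x z : V} (p : G.Walk x z) (hz : z ∈ K) :
    (∀ v ∈ p.support, v ∈ K) ∨ ∃ y t, ∃ (h : G.Adj y t) (p₁ : G.Walk x y) (p₂ : G.Walk t z),
      p = p₁.append (.cons h p₂) ∧ y ∉ K ∧ ∀ v ∈ p₂.support, v ∈ K := by
  induction p with
  | nil => left; simpa using hz
  | @cons x w z h p ih =>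
    rcases ih hz with ih | ⟨y, t, h', p₁, p₂, rfl, h₁, h₂⟩
    · by_cases hx : x ∈ K
      · left
        intro v hv
        rw [Walk.support_cons, List.mem_cons] at hv
        rcases hv with rfl | hv
        exacts [hx, ih v hv]
      · exact .inr ⟨x, w, h, .nil, p, rfl, hx, ih⟩
    · exact .inr ⟨y, t, h', .cons h p₁, p₂, rfl, h₁, h₂⟩

theorem split_path {x y t z : V} {h : G.Adj y t} {p₁ : G.Walk x y} {p₂ : G.Walk t z}
    (hp : (p₁.append (.cons h p₂)).IsPath) :
    p₁.IsPath ∧ p₂.IsPath ∧ y ∉ p₂.support ∧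
      walkWt F (p₁.append (.cons h p₂)) = walkWt F p₁ + edgeWt F s(y, t) + walkWt F p₂ := by
  have h2 := hp.of_append_right
  rw [Walk.cons_isPath_iff] at h2
  refine ⟨hp.of_append_left, h2.1, h2.2, ?_⟩
  simp [walkWt, Walk.edges_append, add_assoc]

theorem edges_ins {K : Set V} {x y : V} (p : G.Walk x y) (hp : ∀ v ∈ p.support, v ∈ K) :
    ∀ e ∈ p.edges, e ∈ ins G K :=
  fun _ he => ⟨p.edges_subset_edgeSet he, fun _ hv => hp _ (p.mem_support_of_mem_edges he hv)⟩

theorem ins_subset (K : Set V) : ins G K ⊆ G.edgeSet := fun _ h => h.1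

theorem not_mem_ins {K : Set V} {x y : V} (hx : x ∉ K) : s(x, y) ∉ ins G K :=
  fun h => hx (h.2 x (Sym2.mem_mk_left x y))

theorem disjoint_ins {K : Set V} {J P : Finset (Sym2 V)} (hJ : ∀ e ∈ J, e ∈ ins G Kᶜ)
    (hP : ∀ e ∈ P, e ∈ ins G K) : Disjoint J P := by
  rw [Finset.disjoint_left]
  intro e h1 h2
  induction e with
  | _ x y => exact (hJ _ h1).2 x (Sym2.mem_mk_left x y) ((hP _ h2).2 x (Sym2.mem_mk_left x y))

/-- An edge set outside `K`, an edge `st` into `K`, a `{t, u}`-join inside `K` and a different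
edge `uy` out of `K` are disjoint, so that weights and boundaries add up. -/
theorem assemble (F : Set (Sym2 V)) {K : Set V} {J₁ J₂ : Finset (Sym2 V)} {s t u y : V}
    (h₁ : ∀ e ∈ J₁, e ∈ ins G Kᶜ) (hs : s ∉ K) (ht : t ∈ K) (hst : G.Adj s t)
    (h₂ : IsJn (ins G K) J₂ t u) (hu : u ∈ K) (hy : y ∉ K) (huy : G.Adj u y)
    (hne : s(s, t) ≠ s(y, u)) :
    ∃ Q : Finset (Sym2 V), (∀ e ∈ Q, e ∈ G.edgeSet) ∧ bd Q = bd J₁ + (dl s + dl y) ∧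
      wt F Q = wt F J₁ + edgeWt F s(s, t) + wt F J₂ + edgeWt F s(y, u) := by
  have htK : t ∉ Kᶜ := fun h => h ht
  have huK : u ∉ Kᶜ := fun h => h hu
  have d1 : Disjoint J₁ J₂ := disjoint_ins h₁ h₂.1
  have d2 : Disjoint (J₁ ∪ J₂) {s(s, t)} := by
    rw [Finset.disjoint_singleton_right, Finset.mem_union]
    rintro (h | h)
    · exact not_mem_ins htK (Sym2.eq_swap ▸ h₁ _ h)
    · exact not_mem_ins hs (h₂.1 _ h)
  have d3 : Disjoint (J₁ ∪ J₂ ∪ {s(s, t)}) {s(y, u)} := by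
    rw [Finset.disjoint_singleton_right, Finset.mem_union, Finset.mem_union,
      Finset.mem_singleton]
    rintro ((h | h) | h)
    · exact not_mem_ins huK (Sym2.eq_swap ▸ h₁ _ h)
    · exact not_mem_ins hy (h₂.1 _ h)
    · exact hne h.symm
  refine ⟨J₁ ∪ J₂ ∪ {s(s, t)} ∪ {s(y, u)}, fun e he => ?_, ?_, ?_⟩
  · simp only [Finset.mem_union, Finset.mem_singleton] at he
    rcases he with ((h | h) | rfl) | rfl
    exacts [(h₁ e h).1, (h₂.1 e h).1, hst, huy.symm]
  · rw [bd_union d3, bd_union d2, bd_union d1, h₂.2, bd_single hst.ne, bd_single huy.ne']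
    linear_combination dbl (dl t) + dbl (dl u)
  · rw [wt_union F d3, wt_union F d2, wt_union F d1, wt_single, wt_single]
    ring

/-- The facts about a decapital distance component `K` at level `i` from which its structure is
derived: `K` is connected and reachable from `r`, its boundary edges run from level `i` to level
`i + 1`, and distances from a vertex of level `i` in `K` are bounded below. -/
structure DecapData (G : SimpleGraph V) (F : Set (Sym2 V)) (r : V) (K : Set V) (i : ℤ) :
    Prop where
  cons : Conservative G F
  low : ∀ x ∈ K, distF G F r x ≤ i
  out : ∀ x ∈ K, ∀ y, y ∉ K → G.Adj y x → distF G F r x = i ∧ distF G F r y = i + 1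
  reach : ∀ x ∈ K, G.Reachable r x
  root : r ∉ K
  bound : ∀ a ∈ K, distF G F r a = i → ∀ x ∈ K, ∀ J, IsJn G.edgeSet J a x →
    distF G F r x - i ≤ wt F J
  conn : (G.induce K).Connected

theorem exists_walk_of_connected {K : Set V} (hK : (G.induce K).Connected) {x y : V}
    (hx : x ∈ K) (hy : y ∈ K) : ∃ p : G.Walk x y, ∀ v ∈ p.support, v ∈ K := by
  obtain ⟨p⟩ := hK.preconnected ⟨x, hx⟩ ⟨y, hy⟩
  refine ⟨p.map (Embedding.induce K).toHom, fun v hv => ?_⟩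
  obtain ⟨w, -, rfl⟩ := List.mem_map.1 ((Walk.support_map _ p).subst (motive := (v ∈ ·)) hv)
  exact w.2

/-- `K` contains an edge of its boundary, hence lies in the connected component of `r`: on
other connected components `distF` is constantly `0`. -/
theorem decapData_of (hc : Conservative G F) (c : G.Coloring Bool) {r : V} {K : Set V} {i : ℤ}
    (hK : IsComponentOf G {x | distF G F r x ≤ i} K) (hr : r ∉ K) {t s : V} (ht : t ∈ K)
    (hs : s ∉ K) (hts : G.Adj t s) : DecapData G F r K i := by
  obtain ⟨-, hsub, hconn, hcl⟩ := hK
  have hrt : G.Reachable r t := by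
    by_contra hn
    have h1 : distF G F r t ≤ i := hsub ht
    rw [distF_of_not_reachable hn] at h1
    refine hs (hcl t ht s ?_ hts)
    change distF G F r s ≤ i
    rwa [distF_of_not_reachable fun h => hn (h.trans hts.symm.reachable)]
  have hreach : ∀ x ∈ K, G.Reachable r x := fun x hx => by
    obtain ⟨p, -⟩ := exists_walk_of_connected hconn ht hx
    exact hrt.trans ⟨p⟩
  refine ⟨hc, hsub, fun x hx y hy hyx => ?_, hreach, hr, fun a ha hai x hx J hJ => ?_, hconn⟩
  · have h1 : distF G F r x ≤ i := hsub hx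
    have h2 : ¬ distF G F r y ≤ i := fun h => hy (hcl x hx y h hyx.symm)
    have h3 := distF_lip hc (hreach x hx) hyx.symm
    omega
  · obtain ⟨p, hp⟩ := exists_walk_of_connected hconn hx ha
    exact level_bound hc c (hreach a ha) hai p (fun v hv => hsub (hp v hv)) J hJ

variable {r : V} {K : Set V} {i : ℤ}

/-- A minimum path from `r` into `K` first enters `K` by an edge of `F`. -/
theorem DecapData.first (D : DecapData G F r K i) :
    ∃ s t, s ∉ K ∧ t ∈ K ∧ G.Adj s t ∧ s(s, t) ∈ F ∧
      ∃ J, IsJn (ins G Kᶜ) J r s ∧ wt F J ≤ i + 1 := by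
  obtain ⟨⟨x, hx⟩⟩ := D.conn.nonempty
  obtain ⟨p, hp, hw⟩ := exists_path_distF (F := F) (D.reach x hx)
  rcases first_entry K p D.root with h | ⟨s, t, h, p₁, p₂, rfl, h₁, ht⟩
  · exact absurd hx (h x p.end_mem_support)
  obtain ⟨hp₁, hp₂, -, hsum⟩ := split_path (F := F) hp
  have hs : s ∉ K := h₁ s p₁.end_mem_support
  obtain ⟨o1, o2⟩ := D.out t ht s hs h
  have b1 := distF_le_walkWt (F := F) p₁ hp₁
  have b2 := D.bound t ht o1 x hx _ (path_isJn p₂ hp₂ fun e he => p₂.edges_subset_edgeSet he)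
  rw [path_wt F p₂ hp₂] at b2
  refine ⟨s, t, hs, ht, h, ?_, _, path_isJn p₁ hp₁ (edges_ins p₁ h₁), ?_⟩
  · by_contra hn
    rw [edgeWt_not_mem hn] at hsum
    omega
  · have := le_edgeWt F s(s, t)
    rw [path_wt F p₁ hp₁]
    omega

/-- A minimum path from `r` to `x ∈ K` last enters `K` by an edge of `F`, and the remaining path
inside `K` has weight `dist(r, x) - i`. -/
theorem DecapData.last (D : DecapData G F r K i) {x : V} (hx : x ∈ K) :
    ∃ s t, s ∉ K ∧ t ∈ K ∧ G.Adj s t ∧ s(s, t) ∈ F ∧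
      ∃ J, IsJn (ins G K) J t x ∧ wt F J ≤ distF G F r x - i := by
  obtain ⟨p, hp, hw⟩ := exists_path_distF (F := F) (D.reach x hx)
  rcases last_entry K p hx with h | ⟨s, t, h, p₁, p₂, rfl, hs, h₂⟩
  · exact absurd (h r p.start_mem_support) D.root
  obtain ⟨hp₁, hp₂, -, hsum⟩ := split_path (F := F) hp
  have ht : t ∈ K := h₂ t p₂.start_mem_support
  obtain ⟨o1, o2⟩ := D.out t ht s hs h
  have b1 := distF_le_walkWt (F := F) p₁ hp₁
  have b2 := D.bound t ht o1 x hx _ (path_isJn p₂ hp₂ fun e he => p₂.edges_subset_edgeSet he)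
  rw [path_wt F p₂ hp₂] at b2
  refine ⟨s, t, hs, ht, h, ?_, _, path_isJn p₂ hp₂ (edges_ins p₂ h₂), ?_⟩
  · by_contra hn
    rw [edgeWt_not_mem hn] at hsum
    omega
  · have := le_edgeWt F s(s, t)
    rw [path_wt F p₂ hp₂]
    omega

/-- Let `s₀t₀` be an `F`-edge of the cut of `K` whose end `s₀` is reached from `r` outside `K` with
weight at most `i + 1`. For any other `F`-edge `st` of the cut, `t` is at distance at least `2`
from `t₀` within `K`; otherwise leaving `K` by `ts` would make `s` too close to `r`. -/
theorem DecapData.two_le (D : DecapData G F r K i) {s₀ t₀ s t : V} (hs₀ : s₀ ∉ K) (ht₀ : t₀ ∈ K)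
    (h₀ : G.Adj s₀ t₀) (hF₀ : s(s₀, t₀) ∈ F) {J₀ : Finset (Sym2 V)}
    (hJ₀ : IsJn (ins G Kᶜ) J₀ r s₀) (hw₀ : wt F J₀ ≤ i + 1) (hs : s ∉ K) (ht : t ∈ K)
    (h : G.Adj s t) (hF : s(s, t) ∈ F) (hne : s(s₀, t₀) ≠ s(s, t)) {J : Finset (Sym2 V)}
    (hJ : IsJn (ins G K) J t₀ t) : 2 ≤ wt F J := by
  obtain ⟨Q, hQ, hb, hw⟩ := assemble F hJ₀.1 hs₀ ht₀ h₀ hJ ht hs h.symm hne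
  have h1 : IsJn G.edgeSet Q r s := ⟨hQ, by
    rw [hb, hJ₀.2]; linear_combination dbl (dl s₀)⟩
  have h2 := distF_le_wt D.cons h1
  rw [edgeWt_mem hF, edgeWt_mem hF₀] at hw
  have := (D.out t ht s hs h).2
  omega

/-- Sebő's theorem for a decapital distance component `K` at level `i`: exactly one edge `st` of
the cut of `K` lies in `F`; `s` can be reached from `r` outside `K` with weight `i + 1`,
and every `x ∈ K` can be reached from `t` inside `K` with weight `dist(r, x) - i`. -/
theorem DecapData.beam (D : DecapData G F r K i) {s t : V} (hs : s ∉ K) (ht : t ∈ K)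
    (h : G.Adj s t) (hF : s(s, t) ∈ F) :
    (∀ s' t', s' ∉ K → t' ∈ K → G.Adj s' t' → s(s', t') ∈ F → s' = s ∧ t' = t) ∧
    (∃ J, IsJn (ins G Kᶜ) J r s ∧ wt F J ≤ i + 1) ∧
    ∀ x ∈ K, ∃ J, IsJn (ins G K) J t x ∧ wt F J ≤ distF G F r x - i := by
  obtain ⟨s₀, t₀, hs₀, ht₀, h₀, hF₀, J₀, hJ₀, hw₀⟩ := D.first
  have heq : ∀ s' t', s' ∉ K → t' ∈ K → s(s₀, t₀) = s(s', t') → s' = s₀ ∧ t' = t₀ := by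
    intro s' t' hs' ht' he
    rcases Sym2.eq_iff.1 he with ⟨h1, h2⟩ | ⟨h1, h2⟩
    · exact ⟨h1.symm, h2.symm⟩
    · exact absurd (h1 ▸ ht') hs₀
  have hstep : ∀ x x', x ∈ K → x' ∈ K → G.Adj x x' →
      (∃ J, IsJn (ins G K) J t₀ x ∧ wt F J ≤ distF G F r x - i) →
      ∃ J, IsJn (ins G K) J t₀ x' ∧ wt F J ≤ distF G F r x' - i := by
    rintro x x' hx hx' hadj ⟨J₁, hJ₁, hw₁⟩
    obtain ⟨s', t', hs', ht', h', hF', J₂, hJ₂, hw₂⟩ := D.last hx'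
    by_cases he : s(s₀, t₀) = s(s', t')
    · obtain ⟨rfl, rfl⟩ := heq s' t' hs' ht' he
      exact ⟨J₂, hJ₂, hw₂⟩
    have hxx : s(x, x') ∈ ins G K := ⟨hadj, fun v hv => by
      rcases Sym2.mem_iff.1 hv with rfl | rfl
      exacts [hx, hx']⟩
    have l1 := D.low x hx
    have l2 := D.low x' hx'
    rcases exchange_adj D.cons (ins_subset K) hJ₁ hJ₂ hxx with
      ⟨J, hJ, hw⟩ | ⟨J₃, J₄, hw, h₃, h₄⟩
    · have := D.two_le hs₀ ht₀ h₀ hF₀ hJ₀ hw₀ hs' ht' h' hF' he hJ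
      omega
    · have := D.bound t' ht' (D.out t' ht' s' hs' h').1 x hx J₃ (h₃.mono (ins_subset K))
      exact ⟨J₄, h₄, by omega⟩
  have hall : ∀ x ∈ K, ∃ J, IsJn (ins G K) J t₀ x ∧ wt F J ≤ distF G F r x - i := by
    intro x hx
    obtain ⟨p, hp⟩ := exists_walk_of_connected D.conn hx ht₀
    have hbase : ∃ J, IsJn (ins G K) J t₀ t₀ ∧ wt F J ≤ distF G F r t₀ - i :=
      ⟨∅, isJn_nil t₀, by rw [(D.out t₀ ht₀ s₀ hs₀ h₀).1]; simp [wt]⟩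
    clear hx
    induction p with
    | nil => exact hbase
    | @cons x w t₁ hadj p ih =>
      have hw := hp w (by simp)
      refine hstep w x hw (hp x (by simp)) hadj.symm ?_
      exact ih ht₀ h₀ hF₀ heq hstep (fun v hv => hp v (by simp [hv])) hbase
  have huniq : ∀ s' t', s' ∉ K → t' ∈ K → G.Adj s' t' → s(s', t') ∈ F → s' = s₀ ∧ t' = t₀ := by
    intro s' t' hs' ht' h' hF'
    by_contra hn
    have hne : s(s₀, t₀) ≠ s(s', t') := fun he => hn (heq s' t' hs' ht' he)
    obtain ⟨J, hJ, hw⟩ := hall t' ht'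
    have := D.two_le hs₀ ht₀ h₀ hF₀ hJ₀ hw₀ hs' ht' h' hF' hne hJ
    have := D.low t' ht'
    omega
  obtain ⟨rfl, rfl⟩ := huniq s t hs ht h hF
  exact ⟨huniq, ⟨J₀, hJ₀, hw₀⟩, hall⟩

/-- An ear of `K`, attached by edges `uv` and `xy` different from the beam, has a nonnegative
interior. If it were negative, it could be exchanged with the part outside `K` of a shortest
path from `r` to `K`, and some neighbour of `K` would be too close to `r`. -/
theorem DecapData.ear (D : DecapData G F r K i) {s t : V} (hs : s ∉ K) (ht : t ∈ K)
    (h : G.Adj s t) (hF : s(s, t) ∈ F) {v u y x : V} (hv : v ∉ K) (hu : u ∈ K) (hvu : G.Adj v u)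
    (hvu' : s(s, t) ≠ s(v, u)) (hy : y ∉ K) (hx : x ∈ K) (hyx : G.Adj y x)
    (hyx' : s(s, t) ≠ s(y, x)) {J : Finset (Sym2 V)} (hJ : IsJn (ins G Kᶜ) J v y) :
    0 ≤ wt F J := by
  obtain ⟨-, ⟨J₀, hJ₀, hw₀⟩, hZ⟩ := D.beam hs ht h hF
  have hback : ∀ {v u : V}, v ∉ K → u ∈ K → G.Adj v u → s(s, t) ≠ s(v, u) →
      ∀ {P : Finset (Sym2 V)}, IsJn (ins G Kᶜ) P s v → 0 ≤ wt F P := by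
    intro v u hv hu hvu hne P hP
    obtain ⟨Q, hQ, hb, hw⟩ := assemble F (K := Kᶜ) (J₁ := ∅) (by simp) (not_not_intro ht) hs
      h.symm hP hv (not_not_intro hu) hvu
      (by rw [Sym2.eq_swap]; exact fun he => hne (he.trans Sym2.eq_swap))
    have h1 : IsJn G.edgeSet Q t u := ⟨hQ, by
      rw [hb]; funext z; simp [bd]⟩
    have h2 := D.bound t ht (D.out t ht s hs h).1 u hu Q h1
    rw [(D.out u hu v hv hvu).1] at h2
    have := edgeWt_le F s(u, v)
    have h0 : wt F ∅ = 0 := by simp [wt]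
    rw [show s(t, s) = s(s, t) from Sym2.eq_swap, edgeWt_mem hF] at hw
    omega
  have hfar : ∀ {v u : V}, v ∉ K → u ∈ K → G.Adj v u →
      ∀ {P : Finset (Sym2 V)}, IsJn (ins G Kᶜ) P r v → i + 1 ≤ wt F P := by
    intro v u hv hu hvu P hP
    rw [← (D.out u hu v hv hvu).2]
    exact distF_le_wt D.cons (hP.mono (ins_subset _))
  by_contra! hlt
  obtain ⟨J₃, J₄, hw, ⟨hE₃, hE₄, hb₃, hb₄⟩ | ⟨h₃, h₄⟩ | ⟨h₃, h₄⟩⟩ :=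
    exchange (G := G) F (ins_subset Kᶜ) hJ₀ hJ
  · have h0 := D.cons J₃ (fun e he => (hE₃ e he).1) hb₃
    obtain ⟨Z, hZ, hwZ⟩ := hZ u hu
    obtain ⟨Q, hQ, hb, hwQ⟩ := assemble F hE₄ hs ht h hZ hu hv hvu.symm hvu'
    have h1 : IsJn G.edgeSet Q r y := ⟨hQ, by
      rw [hb, hb₄]; linear_combination dbl (dl s) + dbl (dl v)⟩
    have h2 := distF_le_wt D.cons h1
    rw [(D.out x hx y hy hyx).2] at h2
    rw [(D.out u hu v hv hvu).1] at hwZ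
    rw [edgeWt_mem hF] at hwQ
    have := edgeWt_le F s(v, u)
    omega
  · have := hback hv hu hvu hvu' h₃.symm
    have := hfar hy hx hyx h₄
    omega
  · have := hback hy hx hyx hyx' h₃.symm
    have := hfar hv hu hvu h₄
    omega

end Components

/-! ### Distances from a congruent vertex -/

section Congruent

open scoped symmDiff

set_option linter.unusedSectionVars false

variable [Fintype V] [DecidableEq V] {G : SimpleGraph V} {F : Set (Sym2 V)} {r : V} {K : Set V}
  {i : ℤ}

/-- Let `m = dist(r', s)`. A join outside `K` from `r'` to a vertex `y ∉ K` that is adjacent to `K`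
by an edge other than the beam `st` has weight at least `m`: it extends through `K`
and over the beam to a `{r', s}`-join of at most the same weight. -/
theorem DecapData.le_of_avoid (D : DecapData G F r K i) {s t : V} (hs : s ∉ K) (ht : t ∈ K)
    (h : G.Adj s t) (hF : s(s, t) ∈ F) {r' : V} {m : ℤ} (hm : distF G F r' s = m)
    {y x : V} (hy : y ∉ K) (hx : x ∈ K) (hyx : G.Adj y x) (hne : s(s, t) ≠ s(y, x))
    {J : Finset (Sym2 V)} (hJ : IsJn (ins G Kᶜ) J r' y) : m ≤ wt F J := by
  obtain ⟨-, -, hZ⟩ := D.beam hs ht h hF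
  obtain ⟨Z, hZ, hwZ⟩ := hZ x hx
  rw [(D.out x hx y hy hyx).1] at hwZ
  obtain ⟨Q, hQ, hb, hw⟩ := assemble F hJ.1 hy hx hyx hZ.symm ht hs h.symm hne.symm
  have h1 : IsJn G.edgeSet Q r' s := ⟨hQ, by
    rw [hb, hJ.2]; linear_combination dbl (dl y)⟩
  have h2 := distF_le_wt D.cons h1
  rw [edgeWt_mem hF] at hw
  have := edgeWt_le F s(y, x)
  omega

/-- A shortest path from `r'` to `t` first enters `K` over the beam `st`, so its initial part
joins `r'` to `s` outside `K`. -/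
theorem DecapData.exists_outer (D : DecapData G F r K i) {s t : V} (hs : s ∉ K) (ht : t ∈ K)
    (h : G.Adj s t) (hF : s(s, t) ∈ F) {r' : V} (hr' : r' ∉ K) (hreach : G.Reachable r' t)
    {j : ℤ} (hj : distF G F r' t = j) (hj' : distF G F r' s = j + 1) :
    ∃ J, IsJn (ins G Kᶜ) J r' s ∧ wt F J ≤ j + 1 := by
  obtain ⟨huniq, -, -⟩ := D.beam hs ht h hF
  obtain ⟨p, hp, hw⟩ := exists_path_distF (F := F) hreach
  rcases first_entry K p hr' with h0 | ⟨y, x, hyx, p₁, p₂, rfl, h₁, hx⟩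
  · exact absurd ht (h0 t p.end_mem_support)
  obtain ⟨hp₁, hp₂, -, hsum⟩ := split_path (F := F) hp
  have hy : y ∉ K := h₁ y p₁.end_mem_support
  have hJ := path_isJn p₁ hp₁ (edges_ins p₁ h₁)
  have hwJ := path_wt F p₁ hp₁
  have b2 := D.bound x hx (D.out x hx y hy hyx).1 t ht _
    (path_isJn p₂ hp₂ fun e he => p₂.edges_subset_edgeSet he)
  rw [path_wt F p₂ hp₂, (D.out t ht s hs h).1] at b2
  by_cases hyF : s(y, x) ∈ F
  · obtain ⟨rfl, rfl⟩ := huniq y x hy hx hyx hyF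
    rw [edgeWt_mem hF] at hsum
    exact ⟨_, hJ, by omega⟩
  · have hne : s(s, t) ≠ s(y, x) := fun he => hyF (he ▸ hF)
    have := D.le_of_avoid hs ht h hF hj' hy hx hyx hne hJ
    rw [edgeWt_not_mem hyF] at hsum
    omega

/-- The vertices of `K` are at distance at most `j = dist(r', t)` from `r'`. -/
theorem DecapData.le_of_mem (D : DecapData G F r K i) {s t : V} (hs : s ∉ K) (ht : t ∈ K)
    (h : G.Adj s t) (hF : s(s, t) ∈ F) {r' : V} (hr' : r' ∉ K) (hreach : G.Reachable r' t)
    {j : ℤ} (hj : distF G F r' t = j) (hj' : distF G F r' s = j + 1) {x : V} (hx : x ∈ K) :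
    distF G F r' x ≤ j := by
  obtain ⟨J, hJ, hwJ⟩ := D.exists_outer hs ht h hF hr' hreach hj hj'
  obtain ⟨-, -, hZ⟩ := D.beam hs ht h hF
  obtain ⟨Z, hZ, hwZ⟩ := hZ x hx
  have hl := D.low x hx
  have d1 : Disjoint J {s(s, t)} := by
    rw [Finset.disjoint_singleton_right]
    exact fun hm => not_mem_ins (K := Kᶜ) (not_not_intro ht) (Sym2.eq_swap ▸ hJ.1 _ hm)
  have d2 : Disjoint (J ∪ {s(s, t)}) Z := by
    rw [Finset.disjoint_union_left, Finset.disjoint_singleton_left]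
    exact ⟨disjoint_ins hJ.1 hZ.1, fun hm => not_mem_ins hs (hZ.1 _ hm)⟩
  have h1 := ((hJ.mono (ins_subset _)).glue (IsJn.single (E := G.edgeSet) h h.ne) d1).glue
    (hZ.mono (ins_subset _)) d2
  have h2 := distF_le_wt D.cons h1
  rw [wt_union F d2, wt_union F d1, wt_single, edgeWt_mem hF] at h2
  omega

/-- The neighbours of `K` outside `K` are at distance more than `j = dist(r', s) - 1` from `r'`. A
shortest path from `r'` to such a neighbour `y` either avoids `K`, or enters it first by an edge
other than the beam, or enters it by the beam; in the last case its part after the last exit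
from `K` is an ear. -/
theorem DecapData.lt_of_adj (D : DecapData G F r K i) {s t : V} (hs : s ∉ K) (ht : t ∈ K)
    (h : G.Adj s t) (hF : s(s, t) ∈ F) {r' : V} (hr' : r' ∉ K) (hreach : G.Reachable r' t)
    {j : ℤ} (hj' : distF G F r' s = j + 1) {y x : V} (hy : y ∉ K) (hx : x ∈ K)
    (hyx : G.Adj y x) : j + 1 ≤ distF G F r' y := by
  obtain ⟨huniq, -, -⟩ := D.beam hs ht h hF
  by_cases hyF : s(y, x) ∈ F
  · rw [(huniq y x hy hx hyx hyF).1, hj']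
  have hne : s(s, t) ≠ s(y, x) := fun he => hyF (he ▸ hF)
  obtain ⟨q₀, -⟩ := exists_walk_of_connected D.conn ht hx
  have hry : G.Reachable r' y := (hreach.trans ⟨q₀⟩).trans hyx.symm.reachable
  obtain ⟨p, hp, hw⟩ := exists_path_distF (F := F) hry
  rw [← hw]
  rcases first_entry K p hr' with h0 | ⟨y₁, x₁, hyx₁, p₁, p₂, rfl, h₁, hx₁⟩
  · rw [← path_wt F p hp]
    exact D.le_of_avoid hs ht h hF hj' hy hx hyx hne (path_isJn p hp (edges_ins p h0))
  obtain ⟨hp₁, hp₂, hsupp, hsum⟩ := split_path (F := F) hp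
  have hy₁ : y₁ ∉ K := h₁ y₁ p₁.end_mem_support
  have o1 := (D.out x hx y hy hyx).1
  have o2 := (D.out x₁ hx₁ y₁ hy₁ hyx₁).1
  by_cases hyF₁ : s(y₁, x₁) ∈ F
  · obtain ⟨rfl, rfl⟩ := huniq y₁ x₁ hy₁ hx₁ hyx₁ hyF₁
    have b1 := distF_le_walkWt (F := F) p₁ hp₁
    rw [edgeWt_mem hF] at hsum
    -- Having entered by the beam, the path leaves `K` for the last time by another edge.
    rcases last_entry Kᶜ p₂ hy with h2 | ⟨u, v, huv, q₁, q₂, rfl, hu, h₂⟩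
    · exact absurd ht (h2 _ p₂.start_mem_support)
    have hu : u ∈ K := not_not.1 hu
    have hv : v ∉ K := h₂ v q₂.start_mem_support
    have hvs : v ≠ y₁ := by
      rintro rfl
      exact hsupp (by simp [Walk.mem_support_append_iff])
    obtain ⟨hq₁, hq₂, -, hsum₂⟩ := split_path (F := F) hp₂
    have hvF : s(v, u) ∉ F := fun hm => hvs (huniq v u hv hu huv.symm hm).1
    have hne' : s(y₁, x₁) ≠ s(v, u) := fun he => hvF (he ▸ hF)
    have b2 := D.bound x₁ ht o2 u hu _
      (path_isJn q₁ hq₁ fun e he => q₁.edges_subset_edgeSet he)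
    have b3 := D.ear hs ht h hF hv hu huv.symm hne' hy hx hyx hne
      (path_isJn q₂ hq₂ (edges_ins q₂ h₂))
    rw [path_wt F q₁ hq₁, (D.out u hu v hv huv.symm).1] at b2
    rw [path_wt F q₂ hq₂] at b3
    rw [show s(u, v) = s(v, u) from Sym2.eq_swap, edgeWt_not_mem hvF] at hsum₂
    omega
  · have hne₁ : s(s, t) ≠ s(y₁, x₁) := fun he => hyF₁ (he ▸ hF)
    have b1 := D.le_of_avoid hs ht h hF hj' hy₁ hx₁ hyx₁ hne₁
      (path_isJn p₁ hp₁ (edges_ins p₁ h₁))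
    have b2 := D.bound x₁ hx₁ o2 x hx _ (symmDiff_single_isJn
      (path_isJn p₂ hp₂ fun e he => p₂.edges_subset_edgeSet he) hyx hyx.ne)
    have b3 := wt_symmDiff_single F p₂.edges.toFinset s(y, x)
    rw [path_wt F p₁ hp₁] at b1
    rw [path_wt F p₂ hp₂] at b3
    rw [edgeWt_not_mem hyF₁] at hsum
    omega

end Congruent

/-- If `K` is a decapital distance component w.r.t. `r` with `F`-root
`rK` and `F`-antiroot `sK`, and `r' ∉ K` is `K`-congruent to `r`, then `K` is also
a decapital distance component w.r.t. `r'`. -/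
theorem stmt_6 {V : Type*} [Fintype V] [DecidableEq V]
    (G : SimpleGraph V) (T : Set V) (hbip : G.Colorable 2) (hgraft : IsGraft G T)
    (F : Set (Sym2 V)) (hF : IsMinJoin G T F)
    (r : V) (K : Set V) (hK : IsDecapDistComp G F r K)
    (rK sK : V) (hadj : G.Adj rK sK) (hbeam : s(rK, sK) ∈ F)
    (hrK : rK ∈ K) (hsK : sK ∉ K)
    (r' : V) (hr' : r' ∉ K)
    (hcong : distF G F r' rK = distF G F r' sK - 1) :
    IsDecapDistComp G F r' K := by
  obtain ⟨i, ⟨-, hcomp⟩, hrK'⟩ := hK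
  have c : G.Coloring Bool := hbip.toColoring (by simp)
  have D := decapData_of (conservative_of_isMinJoin hF) c hcomp hrK' hrK hsK hadj
  have hF' : s(sK, rK) ∈ F := Sym2.eq_swap ▸ hbeam
  -- If `r'` could not reach `rK`, both distances in `hcong` would take the junk value `0`.
  have hreach : G.Reachable r' rK := by
    by_contra hn
    rw [distF_of_not_reachable hn, distF_of_not_reachable (x := r') (y := sK)
      fun h => hn (h.trans hadj.symm.reachable)] at hcong
    omega
  have hj' : distF G F r' sK = distF G F r' rK + 1 := by omega
  refine ⟨distF G F r' rK, ⟨⟨rK, rfl⟩, ⟨rK, hrK⟩, fun x hx => ?_, D.conn,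
    fun x hx y hyU hxy => ?_⟩, hr'⟩
  · exact D.le_of_mem hsK hrK hadj.symm hF' hr' hreach rfl hj' hx
  · by_contra hy
    have h1 := D.lt_of_adj hsK hrK hadj.symm hF' hr' hreach hj' hy hx hxy.symm
    have h2 : distF G F r' y ≤ distF G F r' rK := hyU
    omega
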